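/- Let r ≥ 2 and let a_1, …, a_r be nonnegative integers. Define G(𝔞) := Σ_c p^{Σ_{i=1}^{r−1}(c_i − 1)} ∈ ℚ(p), where the sum is over all integer sequences (c_1, …, c_{r−1}) with c_0 := 1 and 1 ≤ c_i ≤ c_{i−1} + a_i for 1 ≤ i ≤ r−1 (these sequences encode the heaps of type II with piece lengths a_1, …, a_r). Set D(𝔞) := Σ_{j=1}^{r−1}(r−j)·a_j. For 1 ≤ i, j ≤ r−1, define w_{ij} ∈ ℚ(p) by: w_{ij} = p^{−(j−i)(j−i+1)/2·[j>i]} · qbinom(1 + Σ_{t=1}^{i} a_t, j−i+1) evaluated at q = p^{−1}, whenever i−1 ≤ j ≤ i + Σ_{t=1}^{i} a_t, and w_{ij} = 0 otherwise, where [j>i] is 1 if j > i and 0 otherwise, and qbinom(n,m) denotes the Gaussian binomial coefficient (interpreted as 0 when m > n or m < 0, and as 1 when m = 0). Then G(𝔞) = p^{D(𝔞)} · det[(w_{ij})_{1≤i,j≤r−1}]. -/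

import Mathlib

attribute [local instance] Classical.propDecidable

/-- The sequence of left abscissae of a heap of type II: `c_0 = 1` and `c_i` (for
`1 ≤ i ≤ m`) is given by the `i`-th entry of `c`. -/
def leftAbs (m N : ℕ) (c : Fin m → Fin N) : ℕ → ℕ
  | 0 => 1
  | i + 1 => if h : i < m then (c ⟨i, h⟩ : ℕ) else 0

/-- The `q`-factorial `[n]_q! = ∏_{i=1}^{n} (1 + q + … + q^{i-1})`. -/
noncomputable def qfact (q : RatFunc ℚ) (n : ℕ) : RatFunc ℚ :=
  ∏ i ∈ Finset.range n, ∑ j ∈ Finset.range (i + 1), q ^ j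

/-- The Gaussian binomial coefficient `[n choose m]_q`, interpreted as `0` when `m > n`
and as `1` when `m = 0`. -/
noncomputable def qbinom (q : RatFunc ℚ) (n m : ℕ) : RatFunc ℚ :=
  if m ≤ n then qfact q n / (qfact q m * qfact q (n - m)) else 0

/-- `G(𝔞) = Σ_c p^{Σ_{i=1}^{r-1} (c_i - 1)}`, summed over all sequences
`(c_1, …, c_{r-1})` with `c_0 := 1` and `1 ≤ c_i ≤ c_{i-1} + a_i`
(heaps of type II with piece lengths `a_1, …, a_r`). -/
noncomputable def heapGF (r : ℕ) (a : ℕ → ℕ) : RatFunc ℚ :=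
  ∑ c ∈ Finset.univ.filter
      (fun c : Fin (r - 1) → Fin (2 + ∑ t ∈ Finset.Icc 1 (r - 1), a t) =>
        ∀ i ∈ Finset.Icc 1 (r - 1),
          1 ≤ leftAbs _ _ c i ∧ leftAbs _ _ c i ≤ leftAbs _ _ c (i - 1) + a i),
    RatFunc.X ^ (∑ i ∈ Finset.Icc 1 (r - 1), (leftAbs _ _ c i - 1))

/-- The matrix entry `w_{ij}` (for `1 ≤ i,j ≤ r-1`):
`w_{ij} = p^{-(j-i)(j-i+1)/2·[j>i]} · qbinom(1 + Σ_{t≤i} a_t, j-i+1)` at `q = p⁻¹`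
when `i - 1 ≤ j ≤ i + Σ_{t≤i} a_t`, and `0` otherwise. -/
noncomputable def wEntry (a : ℕ → ℕ) (i j : ℕ) : RatFunc ℚ :=
  if i - 1 ≤ j ∧ j ≤ i + ∑ t ∈ Finset.Icc 1 i, a t then
    (RatFunc.X⁻¹ : RatFunc ℚ) ^ (if i < j then (j - i) * (j - i + 1) / 2 else 0) *
      qbinom RatFunc.X⁻¹ (1 + ∑ t ∈ Finset.Icc 1 i, a t) (j + 1 - i)
  else 0

/-- partial sums of piece lengths -/
def psumA (a : ℕ → ℕ) (i : ℕ) : ℕ := ∑ t ∈ Finset.Icc 1 i, a t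

lemma psumA_succ (a : ℕ → ℕ) (i : ℕ) : psumA a (i + 1) = psumA a i + a (i + 1) := by
  unfold psumA
  rw [Finset.sum_Icc_succ_top (by omega)]

/-- sum over weakly increasing bounded sequences, as a functional of the last entry -/
noncomputable def Lam (q : RatFunc ℚ) (a : ℕ → ℕ) : ℕ → (ℕ → RatFunc ℚ) → RatFunc ℚ
  | 0, g => g 0
  | n + 1, g => Lam q a n (fun d => ∑ y ∈ Finset.Ico d (psumA a (n + 1) + 1), q ^ y * g y)

lemma Lam_congr (q : RatFunc ℚ) (a : ℕ → ℕ) (n : ℕ) (g h : ℕ → RatFunc ℚ)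
    (H : ∀ d ≤ psumA a n, g d = h d) : Lam q a n g = Lam q a n h := by
  cases n with
  | zero => exact H 0 (Nat.zero_le _)
  | succ n =>
    simp only [Lam]
    congr 1
    funext d
    refine Finset.sum_congr rfl fun y hy => ?_
    rw [Finset.mem_Ico] at hy
    rw [H y (by omega)]

lemma Lam_add (q : RatFunc ℚ) (a : ℕ → ℕ) (n : ℕ) (g h : ℕ → RatFunc ℚ) :
    Lam q a n (fun d => g d + h d) = Lam q a n g + Lam q a n h := by
  induction n generalizing g h with
  | zero => rfl
  | succ n ih => simp only [Lam, mul_add, Finset.sum_add_distrib, ih]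

lemma Lam_smul (q : RatFunc ℚ) (a : ℕ → ℕ) (n : ℕ) (c : RatFunc ℚ) (g : ℕ → RatFunc ℚ) :
    Lam q a n (fun d => c * g d) = c * Lam q a n g := by
  induction n generalizing g with
  | zero => rfl
  | succ n ih =>
    simp only [Lam, mul_left_comm _ c, ← Finset.mul_sum, ih]

/-- elementary symmetric function of `1, q, …, q^{n-1}` -/
noncomputable def Esym (q : RatFunc ℚ) : ℕ → ℕ → RatFunc ℚ
  | 0, _ => 1
  | _ + 1, 0 => 0
  | k + 1, n + 1 => Esym q (k + 1) n + q ^ n * Esym q k n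

lemma Esym_tele (q : RatFunc ℚ) (k d n : ℕ) (h : d ≤ n) :
    Esym q (k + 1) d + ∑ y ∈ Finset.Ico d n, q ^ y * Esym q k y = Esym q (k + 1) n := by
  induction n, h using Nat.le_induction with
  | base => simp
  | succ n hn ih => rw [Finset.sum_Ico_succ_top hn, ← add_assoc, ih, Esym]

lemma Lam_rec (q : RatFunc ℚ) (a : ℕ → ℕ) (m k : ℕ) :
    Lam q a m (Esym q (k + 1)) + Lam q a (m + 1) (Esym q k) =
      Esym q (k + 1) (psumA a (m + 1) + 1) * Lam q a m (Esym q 0) := by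
  rw [← Lam_smul, Lam, ← Lam_add]
  apply Lam_congr
  intro d hd
  rw [Esym_tele]
  · simp [Esym]
  · rw [psumA_succ]; omega

/-- the matrix entries, 0-indexed -/
noncomputable def wE (q : RatFunc ℚ) (a : ℕ → ℕ) (i j : ℕ) : RatFunc ℚ :=
  if i ≤ j + 1 then Esym q (j + 1 - i) (psumA a (i + 1) + 1) else 0

lemma det_gen (q : RatFunc ℚ) (a : ℕ → ℕ) (m k : ℕ) :
    (Matrix.of fun i j : Fin (m + 1) => wE q a i (if (j : ℕ) = m then m + k else j)).det
      = Lam q a (m + 1) (Esym q k) := by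
  induction m generalizing k with
  | zero =>
    have h := Lam_rec q a 0 k
    simp [Lam, Esym] at h
    simp [wE, Lam, h, Esym]
  | succ m ih =>
    have h := Lam_rec q a (m + 1) k
    rw [← ih, ← ih] at h
    rw [Matrix.det_succ_row _ (Fin.last (m + 1)), Fin.sum_univ_castSucc, Fin.sum_univ_castSucc]
    rw [Finset.sum_eq_zero]
    · have e1 : ((Matrix.of fun i j : Fin (m + 1 + 1) =>
          wE q a i (if (j : ℕ) = m + 1 then m + 1 + k else j)).submatrix
          (Fin.last (m + 1)).succAbove (Fin.last (m + 1)).succAbove) =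
          (Matrix.of fun i j : Fin (m + 1) => wE q a i (if (j : ℕ) = m then m + 0 else j)) := by
        ext i j
        have hj := j.2
        simp only [Matrix.submatrix_apply, Matrix.of_apply, Fin.succAbove_last, Fin.val_castSucc]
        congr 1
        split_ifs <;> omega
      have e2 : ((Matrix.of fun i j : Fin (m + 1 + 1) =>
          wE q a i (if (j : ℕ) = m + 1 then m + 1 + k else j)).submatrix
          (Fin.last (m + 1)).succAbove (Fin.last m).castSucc.succAbove) =
          (Matrix.of fun i j : Fin (m + 1) =>
            wE q a i (if (j : ℕ) = m then m + (k + 1) else j)) := by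
        ext i j
        simp only [Matrix.submatrix_apply, Matrix.of_apply, Fin.succAbove_last, Fin.val_castSucc]
        congr 1
        have hj := j.2
        by_cases hjm : (j : ℕ) = m
        · have : j = Fin.last m := Fin.ext hjm
          subst this
          rw [Fin.succAbove_castSucc_self]
          simp
          omega
        · have : j.castSucc < (Fin.last m).castSucc := by
            rw [Fin.lt_def]; simp; omega
          rw [Fin.succAbove_of_castSucc_lt _ _ this]
          simp only [Fin.val_castSucc]
          split_ifs <;> omega
      rw [e1, e2]
      have w1 : wE q a (m + 1) m = 1 := by simp [wE, Esym]
      have w2 : wE q a (m + 1) (m + 1 + k) = Esym q (k + 1) (psumA a (m + 1 + 1) + 1) := by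
        unfold wE
        rw [if_pos (by omega)]
        congr 1
        omega
      have s1 : (-1 : RatFunc ℚ) ^ (m + 1 + m) = -1 := Odd.neg_one_pow ⟨m, by ring⟩
      have s2 : (-1 : RatFunc ℚ) ^ (m + 1 + (m + 1)) = 1 := Even.neg_one_pow ⟨m + 1, by ring⟩
      simp only [Matrix.of_apply, Fin.val_last, Fin.val_castSucc, if_true, s1, s2,
        if_neg (show ¬ m = m + 1 by omega), w1, w2]
      linear_combination -h
    · intro x _
      have hx := x.2
      have : wE q a (m + 1) x = 0 := by
        unfold wE
        rw [if_neg (by omega)]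
      simp only [Matrix.of_apply, Fin.val_last, Fin.val_castSucc,
        if_neg (show ¬ (x : ℕ) = m + 1 by omega), this]
      simp

lemma det_wE (q : RatFunc ℚ) (a : ℕ → ℕ) (m : ℕ) :
    (Matrix.of fun i j : Fin (m + 1) => wE q a i j).det = Lam q a (m + 1) (fun _ => 1) := by
  have h := det_gen q a m 0
  have e : Esym q 0 = fun _ => 1 := by funext n; simp [Esym]
  rw [← e, ← h]
  congr 1
  ext i j
  simp only [Matrix.of_apply]
  congr 1
  split_ifs <;> omega

lemma qint_ne (i : ℕ) : ∑ j ∈ Finset.range (i + 1), (RatFunc.X⁻¹ : RatFunc ℚ) ^ j ≠ 0 := by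
  intro h
  have h2 := geom_sum_mul (RatFunc.X⁻¹ : RatFunc ℚ) (i + 1)
  rw [h, zero_mul, inv_pow, eq_comm, sub_eq_zero, inv_eq_one] at h2
  rw [← RatFunc.algebraMap_X, ← map_pow, ← map_one (algebraMap (Polynomial ℚ) (RatFunc ℚ))] at h2
  have h3 := congrArg Polynomial.natDegree (RatFunc.algebraMap_injective ℚ h2)
  simp at h3

lemma qfact_ne (n : ℕ) : qfact RatFunc.X⁻¹ n ≠ 0 :=
  Finset.prod_ne_zero_iff.2 fun i _ => qint_ne i

lemma qfact_succ (q : RatFunc ℚ) (n : ℕ) :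
    qfact q (n + 1) = qfact q n * ∑ j ∈ Finset.range (n + 1), q ^ j :=
  Finset.prod_range_succ _ _

lemma pascal (n k : ℕ) : qbinom RatFunc.X⁻¹ (n + 1 + k) (k + 1) =
    qbinom RatFunc.X⁻¹ (n + k) (k + 1) + RatFunc.X⁻¹ ^ n * qbinom RatFunc.X⁻¹ (n + k) k := by
  unfold qbinom
  cases n with
  | zero =>
    rw [if_pos (by omega), if_neg (by omega), if_pos (by omega)]
    have h1 := qfact_ne k
    have h2 := qfact_ne (k + 1)
    have h0 : qfact RatFunc.X⁻¹ 0 = 1 := by simp [qfact]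
    simp only [show 0 + 1 + k = k + 1 by omega, Nat.sub_self, show 0 + k = k by omega, h0]
    simp [h1, h2]
  | succ n =>
    rw [if_pos (by omega), if_pos (by omega), if_pos (by omega)]
    rw [show n + 1 + 1 + k - (k + 1) = n + 1 by omega, show n + 1 + k - (k + 1) = n by omega,
      show n + 1 + k - k = n + 1 by omega, show n + 1 + 1 + k = (n + 1 + k) + 1 by omega,
      qfact_succ _ (n + 1 + k), qfact_succ _ n, qfact_succ _ k]
    have h1 := qfact_ne n
    have h2 := qfact_ne k
    have h3 := qint_ne n
    have h4 := qint_ne k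
    have h5 : ∑ j ∈ Finset.range (n + 1 + k + 1), (RatFunc.X⁻¹ : RatFunc ℚ) ^ j =
      ∑ j ∈ Finset.range (n + 1), (RatFunc.X⁻¹ : RatFunc ℚ) ^ j +
      RatFunc.X⁻¹ ^ (n + 1) * ∑ j ∈ Finset.range (k + 1), (RatFunc.X⁻¹ : RatFunc ℚ) ^ j := by
      rw [add_assoc (n + 1), Finset.sum_range_add, Finset.mul_sum]
      simp only [pow_add]
    rw [h5]
    generalize ∑ j ∈ Finset.range (n + 1), (RatFunc.X⁻¹ : RatFunc ℚ) ^ j = u at *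
    generalize ∑ j ∈ Finset.range (k + 1), (RatFunc.X⁻¹ : RatFunc ℚ) ^ j = v at *
    generalize (RatFunc.X⁻¹ : RatFunc ℚ) ^ (n + 1) = w at *
    generalize qfact RatFunc.X⁻¹ n = f1 at *
    generalize qfact RatFunc.X⁻¹ k = f2 at *
    field_simp

lemma Esym_zero_of_lt (q : RatFunc ℚ) (k n : ℕ) (h : n < k) : Esym q k n = 0 := by
  induction n generalizing k with
  | zero => cases k with
    | zero => omega
    | succ k => rfl
  | succ n ih => cases k with
    | zero => omega
    | succ k => rw [Esym, ih _ (by omega), ih _ (by omega)]; simp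

lemma qbinom_zero (n : ℕ) : qbinom RatFunc.X⁻¹ n 0 = 1 := by
  have h0 : qfact RatFunc.X⁻¹ 0 = 1 := by simp [qfact]
  simp [qbinom, h0, qfact_ne]

lemma Esym_closed (k n : ℕ) :
    Esym RatFunc.X⁻¹ k n = RatFunc.X⁻¹ ^ (k * (k - 1) / 2) * qbinom RatFunc.X⁻¹ n k := by
  induction n generalizing k with
  | zero => cases k with
    | zero => simp [Esym, qbinom_zero]
    | succ k => simp [Esym, qbinom]
  | succ n ih => cases k with
    | zero => simp [Esym, qbinom_zero]
    | succ k =>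
      by_cases h : k ≤ n
      · obtain ⟨m, rfl⟩ := Nat.exists_eq_add_of_le' h
        rw [Esym, ih, ih, show m + k + 1 = m + 1 + k by omega, pascal, mul_add, ← mul_assoc,
          ← mul_assoc, ← pow_add, ← pow_add]
        congr 3
        have : (k + 1) * (k + 1 - 1) = k * (k - 1) + k * 2 := by
          cases k <;> simp; ring
        rw [this, Nat.add_mul_div_right _ _ (by norm_num)]
        omega
      · rw [Esym_zero_of_lt _ _ _ (by omega), qbinom, if_neg (by omega), mul_zero]

lemma wEntry_eq (a : ℕ → ℕ) (i j : ℕ) :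
    wEntry a (i + 1) (j + 1) = wE RatFunc.X⁻¹ a i j := by
  unfold wEntry wE
  change (if i + 1 - 1 ≤ j + 1 ∧ j + 1 ≤ i + 1 + psumA a (i + 1) then _ * qbinom _ (1 + psumA a (i + 1)) _ else _) = _
  by_cases h : i ≤ j + 1
  · rw [if_pos h]
    by_cases h2 : j + 1 ≤ i + 1 + psumA a (i + 1)
    · rw [if_pos ⟨by omega, h2⟩, Esym_closed, add_comm 1 (psumA a (i + 1)),
        show j + 1 + 1 - (i + 1) = j + 1 - i by omega]
      congr 2
      split_ifs with h3
      · obtain ⟨d, rfl⟩ : ∃ d, j = i + d := ⟨j - i, by omega⟩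
        rw [show i + d + 1 - (i + 1) = d by omega, show i + d + 1 - i = d + 1 by omega,
          Nat.add_sub_cancel, mul_comm]
      · have : j + 1 - i = 0 ∨ j + 1 - i = 1 := by omega
        rcases this with h | h <;> rw [h]
    · rw [if_neg (by tauto), Esym_zero_of_lt _ _ _ (by omega)]
  · rw [if_neg h, if_neg (by omega)]

/-- validity of a sequence -/
def Vld (a : ℕ → ℕ) (n N : ℕ) (c : Fin n → Fin N) : Prop :=
  ∀ i ∈ Finset.Icc 1 n,
          1 ≤ leftAbs n N c i ∧ leftAbs n N c i ≤ leftAbs n N c (i - 1) + a i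

lemma leftAbs_snoc_le (n N : ℕ) (c : Fin n → Fin N) (x : Fin N) (i : ℕ) (h : i ≤ n) :
    leftAbs (n + 1) N (Fin.snoc c x : Fin (n + 1) → Fin N) i = leftAbs n N c i := by
  cases i with
  | zero => rfl
  | succ i =>
    have h' : i < n := h
    simp [leftAbs, Fin.snoc, h', Nat.lt_succ_of_lt h']

lemma leftAbs_snoc_last (n N : ℕ) (c : Fin n → Fin N) (x : Fin N) :
    leftAbs (n + 1) N (Fin.snoc c x : Fin (n + 1) → Fin N) (n + 1) = x := by
  simp [leftAbs, Fin.snoc]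

lemma Vld_snoc (a : ℕ → ℕ) (n N : ℕ) (c : Fin n → Fin N) (x : Fin N) :
    Vld a (n + 1) N (Fin.snoc c x : Fin (n + 1) → Fin N) ↔
      Vld a n N c ∧ (1 ≤ (x : ℕ) ∧ (x : ℕ) ≤ leftAbs n N c n + a (n + 1)) := by
  unfold Vld
  constructor
  · intro h
    constructor
    · intro i hi
      rw [Finset.mem_Icc] at hi
      have := h i (Finset.mem_Icc.2 ⟨hi.1, by omega⟩)
      rwa [leftAbs_snoc_le _ _ _ _ _ hi.2, leftAbs_snoc_le _ _ _ _ (i - 1) (by omega)] at this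
    · have := h (n + 1) (Finset.mem_Icc.2 ⟨by omega, le_rfl⟩)
      rwa [leftAbs_snoc_last, Nat.add_sub_cancel, leftAbs_snoc_le _ _ _ _ n le_rfl] at this
  · rintro ⟨h1, h2⟩ i hi
    rw [Finset.mem_Icc] at hi
    by_cases h : i = n + 1
    · subst h
      rwa [leftAbs_snoc_last, Nat.add_sub_cancel, leftAbs_snoc_le _ _ _ _ n le_rfl]
    · rw [leftAbs_snoc_le _ _ _ _ i (by omega), leftAbs_snoc_le _ _ _ _ (i - 1) (by omega)]
      exact h1 i (Finset.mem_Icc.2 ⟨hi.1, by omega⟩)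

lemma heap_inner_sum (N A' d : ℕ) (hN : 2 + A' ≤ N) (hd : d ≤ A') (g : ℕ → RatFunc ℚ) :
    (∑ x : Fin N, if 1 ≤ (x : ℕ) ∧ (x : ℕ) ≤ A' + 1 - d then
        RatFunc.X ^ ((x : ℕ) - 1) * g x else 0) =
      RatFunc.X ^ A' * ∑ y ∈ Finset.Ico d (A' + 1), RatFunc.X⁻¹ ^ y * g (A' + 1 - y) := by
  rw [Fin.sum_univ_eq_sum_range (fun x => if 1 ≤ x ∧ x ≤ A' + 1 - d then
        RatFunc.X ^ (x - 1) * g x else (0 : RatFunc ℚ)) N, ← Finset.sum_filter, Finset.mul_sum]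
  refine Finset.sum_nbij' (fun x => A' + 1 - x) (fun y => A' + 1 - y) ?_ ?_ ?_ ?_ ?_
  · intro x hx; simp at hx ⊢; omega
  · intro x hx; simp at hx ⊢; omega
  · intro x hx; simp at hx ⊢; omega
  · intro x hx; simp at hx ⊢; omega
  · intro x hx
    simp only [Finset.mem_filter, Finset.mem_range] at hx
    rw [show A' + 1 - (A' + 1 - x) = x by omega, ← mul_assoc]
    congr 1
    obtain ⟨e, he⟩ : ∃ e, A' = (x - 1) + e := ⟨A' - (x - 1), by omega⟩
    rw [show A' + 1 - x = e by omega, he, pow_add, mul_assoc, ← mul_pow,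
      mul_inv_cancel₀ RatFunc.X_ne_zero, one_pow, mul_one]

lemma heap_gen (a : ℕ → ℕ) (N n : ℕ) (hN : 2 + psumA a n ≤ N) (g : ℕ → RatFunc ℚ) :
    (∑ c : Fin n → Fin N, if Vld a n N c then
      RatFunc.X ^ (∑ i ∈ Finset.Icc 1 n, (leftAbs n N c i - 1)) * g (leftAbs n N c n) else 0) =
    RatFunc.X ^ (∑ i ∈ Finset.range n, psumA a (i + 1)) *
      Lam RatFunc.X⁻¹ a n (fun d => g (psumA a n + 1 - d)) := by
  induction n generalizing g with
  | zero => simp [Vld, leftAbs, Lam, psumA]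
  | succ n ih =>
    have hs := psumA_succ a n
    rw [← (Fin.snocEquiv (fun _ : Fin (n + 1) => Fin N)).sum_comp, Fintype.sum_prod_type,
      Finset.sum_comm]
    rw [Finset.sum_range_succ, pow_add, mul_assoc, Lam, ← Lam_smul]
    have key : Lam RatFunc.X⁻¹ a n (fun d => RatFunc.X ^ psumA a (n + 1) *
        ∑ y ∈ Finset.Ico d (psumA a (n + 1) + 1),
          RatFunc.X⁻¹ ^ y * g (psumA a (n + 1) + 1 - y)) =
        Lam RatFunc.X⁻¹ a n (fun d => (fun l => ∑ x : Fin N,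
          if 1 ≤ (x : ℕ) ∧ (x : ℕ) ≤ l + a (n + 1) then
          RatFunc.X ^ ((x : ℕ) - 1) * g x else 0) (psumA a n + 1 - d)) := by
      apply Lam_congr
      intro d hd
      rw [← heap_inner_sum N _ d hN (by omega)]
      simp only [show psumA a n + 1 - d + a (n + 1) = psumA a (n + 1) + 1 - d by omega]
    rw [key, ← ih (by omega) (fun l => ∑ x : Fin N,
          if 1 ≤ (x : ℕ) ∧ (x : ℕ) ≤ l + a (n + 1) then
          RatFunc.X ^ ((x : ℕ) - 1) * g x else 0)]
    refine Finset.sum_congr rfl fun c _ => ?_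
    have hsn : ∀ x : Fin N, (Fin.snocEquiv (fun _ : Fin (n + 1) => Fin N)) (x, c) =
        (Fin.snoc c x : Fin (n + 1) → Fin N) := fun _ => rfl
    simp only [hsn, Vld_snoc, leftAbs_snoc_last]
    by_cases hv : Vld a n N c
    · rw [if_pos hv, Finset.mul_sum]
      refine Finset.sum_congr rfl fun x _ => ?_
      by_cases hx : 1 ≤ (x : ℕ) ∧ (x : ℕ) ≤ leftAbs n N c n + a (n + 1)
      · rw [if_pos ⟨hv, hx⟩, if_pos hx, Finset.sum_Icc_succ_top (by omega), leftAbs_snoc_last,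
          pow_add, mul_assoc]
        congr 2
        refine Finset.sum_congr rfl fun i hi => ?_
        rw [leftAbs_snoc_le _ _ _ _ _ (Finset.mem_Icc.1 hi).2]
      · rw [if_neg (by tauto), if_neg hx, mul_zero]
    · rw [if_neg hv]
      exact Finset.sum_eq_zero fun x _ => if_neg (by tauto)

lemma D_eq (a : ℕ → ℕ) (n : ℕ) : ∑ j ∈ Finset.Icc 1 n, (n + 1 - j) * a j =
    ∑ i ∈ Finset.range n, psumA a (i + 1) := by
  induction n with
  | zero => simp
  | succ n ih =>
    rw [Finset.sum_range_succ, ← ih, psumA, Finset.sum_Icc_succ_top (by omega),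
      Finset.sum_Icc_succ_top (by omega), ← add_assoc, ← Finset.sum_add_distrib]
    congr 1
    · refine Finset.sum_congr rfl fun j hj => ?_
      rw [Finset.mem_Icc] at hj
      rw [show n + 1 + 1 - j = (n + 1 - j) + 1 by omega]
      ring
    · simp

/-- `G(𝔞) = p^{D(𝔞)} · det[(w_{ij})_{1≤i,j≤r-1}]` where
`D(𝔞) = Σ_{j=1}^{r-1} (r-j)·a_j`. -/
theorem stmt_4 (r : ℕ) (hr : 2 ≤ r) (a : ℕ → ℕ) :
    heapGF r a =
      RatFunc.X ^ (∑ j ∈ Finset.Icc 1 (r - 1), (r - j) * a j) *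
        (Matrix.of fun i j : Fin (r - 1) => wEntry a ((i : ℕ) + 1) ((j : ℕ) + 1)).det := by
  obtain ⟨n, rfl⟩ : ∃ n, r = n + 2 := ⟨r - 2, by omega⟩
  simp only [wEntry_eq]
  have h := heap_gen a (2 + psumA a (n + 1)) (n + 1) le_rfl (fun _ => 1)
  have hd := det_wE RatFunc.X⁻¹ a n
  rw [← hd, ← D_eq, ← Finset.sum_filter] at h
  simp only [mul_one] at h
  exact h
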